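/- arXiv:1109.5199 — 2 statements merged into one kernel-verified Lean document; each statement's English description precedes it below -/
import Mathlib

section
/- Suppose 1/s₁ + 1/s₂ < 1 and a > 0 is sufficiently small. Then W_a(1/2) = 1/2 + ra, W_a²(1/2) = −ra(s₂+qa) + 1/2 + ra, and for every m with 3 ≤ m ≤ k(a), W_a^m(1/2) = −a(s₁+pa)^{m−2}·r[s₁s₂−s₁−s₂+a(qs₁+ps₂−p−q+pqa)]/(s₁+pa−1) + (s₁−1+pa−2ra)/(2(s₁+pa−1)). -/
open MeasureTheory Filter Topology

/-- The W-like map `W_a` with parameters `s₁ s₂ p q r` and perturbation `a`. -/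
noncomputable def Wmap (s₁ s₂ p q r a : ℝ) (x : ℝ) : ℝ :=
  if x < 1/2 - (1/2 + r*a)/(s₁ + p*a) then
    1 - (2*(s₁ + p*a)/(s₁ - 1 + p*a - 2*r*a)) * x
  else if x < 1/2 then
    (s₁ + p*a)*(x - 1/2) + 1/2 + r*a
  else if x < 1/2 + (1/2 + r*a)/(s₂ + q*a) then
    -(s₂ + q*a)*(x - 1/2) + 1/2 + r*a
  else
    1 + (2*(s₂ + q*a)/(s₂ - 1 + q*a - 2*r*a)) * (x - 1)

/-- `k(a)`: the first iterate `j ≥ 1` at which the trajectory of `1/2` under `W_a`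
drops below `1/2 − (1/2+ra)/(s₁+pa)`. -/
noncomputable def kIndex (s₁ s₂ p q r a : ℝ) : ℕ :=
  sInf {j : ℕ | 1 ≤ j ∧
    (Wmap s₁ s₂ p q r a)^[j] (1/2) ≤ 1/2 - (1/2 + r*a)/(s₁ + p*a)}

/-- `k₁(a) = ⌊2k(a)/3⌋`, the integer part of `2k(a)/3`. -/
noncomputable def kIndex1 (s₁ s₂ p q r a : ℝ) : ℕ :=
  2 * kIndex s₁ s₂ p q r a / 3

/-!
On `[1/2 - (1/2 + r*a)/(s₁ + p*a), 1/2)` the map `W_a` is the homothety of ratio `s₁ + p*a` about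
its fixed point `x* < 1/2`. The second iterate of `1/2` lies below `x*` exactly when
`1/(s₁ + p*a) + 1/(s₂ + q*a) ≤ 1`, which for small `a` follows from `1/s₁ + 1/s₂ < 1`. The orbit
then moves away from `x*` to the left geometrically until it leaves the interval at time `k(a)`.
-/

theorem iterate_eq_add_pow_mul_sub_of_le {R : Type*} [CommRing R] [PartialOrder R] [IsOrderedRing R]
    {f : R → R} {b c s x : R} {n : ℕ} (hs : 0 ≤ s)
    (hf : ∀ y, b ≤ y → y ≤ c → f y = c + s * (y - c)) (hx : x ≤ c)
    (hb : ∀ j < n, b ≤ f^[j] x) :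
    f^[n] x = c + s ^ n * (x - c) := by
  induction n with
  | zero => simp
  | succ n ih =>
    have hn : f^[n] x = c + s ^ n * (x - c) := ih fun j hj ↦ hb j (hj.trans n.lt_succ_self)
    have hle : f^[n] x ≤ c := by
      rw [hn]
      exact add_le_of_nonpos_right
        (mul_nonpos_of_nonneg_of_nonpos (pow_nonneg hs n) (sub_nonpos.2 hx))
    rw [Function.iterate_succ_apply', hf _ (hb n n.lt_succ_self) hle, hn]
    ring

section

variable {s₁ s₂ p q r a x : ℝ}

/-- The left endpoint of the interval on which `W_a` is its increasing branch; it is the threshold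
in the definition of `k(a)`. -/
noncomputable def WmapLeftPt (s₁ p r a : ℝ) : ℝ :=
  1 / 2 - (1 / 2 + r * a) / (s₁ + p * a)

theorem Wmap_of_le_of_lt_half (hx₁ : WmapLeftPt s₁ p r a ≤ x) (hx₂ : x < 1 / 2) :
    Wmap s₁ s₂ p q r a x = (s₁ + p * a) * (x - 1 / 2) + 1 / 2 + r * a := by
  rw [WmapLeftPt] at hx₁
  rw [Wmap, if_neg hx₁.not_gt, if_pos hx₂]

theorem Wmap_of_half_le_of_lt (hcut : 0 ≤ (1 / 2 + r * a) / (s₁ + p * a)) (hx₁ : 1 / 2 ≤ x)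
    (hx₂ : x < 1 / 2 + (1 / 2 + r * a) / (s₂ + q * a)) :
    Wmap s₁ s₂ p q r a x = -(s₂ + q * a) * (x - 1 / 2) + 1 / 2 + r * a := by
  rw [Wmap, if_neg (by linarith), if_neg hx₁.not_gt, if_pos hx₂]

theorem Wmap_half (hS : 0 < s₁ + p * a) (hT : 0 < s₂ + q * a) (hR : 0 < 1 / 2 + r * a) :
    Wmap s₁ s₂ p q r a (1 / 2) = 1 / 2 + r * a := by
  rw [Wmap_of_half_le_of_lt (by positivity) le_rfl (lt_add_of_pos_right _ (by positivity))]
  ring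

theorem Wmap_iterate_two_half (hS : 0 < s₁ + p * a) (hT : 0 < s₂ + q * a) (hR : 0 ≤ r * a)
    (hRT : r * a * (s₂ + q * a) < 1 / 2 + r * a) :
    (Wmap s₁ s₂ p q r a)^[2] (1 / 2) = -(r * a) * (s₂ + q * a) + 1 / 2 + r * a := by
  have hlt : r * a < (1 / 2 + r * a) / (s₂ + q * a) := (lt_div_iff₀ hT).2 hRT
  rw [Function.iterate_succ_apply', Function.iterate_one, Wmap_half hS hT (by positivity),
    Wmap_of_half_le_of_lt (by positivity) (le_add_of_nonneg_right hR) (by gcongr)]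
  ring

/-- The fixed point of the increasing affine branch of `W_a` whose graph ends at
`(1 / 2, 1 / 2 + r * a)`. Its slope is `s₁ + p * a`; for slope `1` the value is junk. -/
noncomputable def WmapFixedPt (s₁ p r a : ℝ) : ℝ :=
  (s₁ - 1 + p * a - 2 * r * a) / (2 * (s₁ + p * a - 1))

theorem WmapFixedPt_lt_half (hS : 1 < s₁ + p * a) (hR : 0 < r * a) :
    WmapFixedPt s₁ p r a < 1 / 2 := by
  rw [WmapFixedPt, div_lt_div_iff₀ (by linarith) two_pos]
  linarith

theorem Wmap_eq_WmapFixedPt_add (hS : s₁ + p * a ≠ 1)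
    (hx₁ : WmapLeftPt s₁ p r a ≤ x) (hx₂ : x < 1 / 2) :
    Wmap s₁ s₂ p q r a x =
      WmapFixedPt s₁ p r a + (s₁ + p * a) * (x - WmapFixedPt s₁ p r a) := by
  have hS' : s₁ + p * a - 1 ≠ 0 := sub_ne_zero.2 hS
  rw [Wmap_of_le_of_lt_half hx₁ hx₂, WmapFixedPt]
  field_simp
  ring

theorem Wmap_iterate_of_le_WmapFixedPt {n : ℕ} (hS : 1 < s₁ + p * a) (hR : 0 < r * a)
    (hx : x ≤ WmapFixedPt s₁ p r a)
    (hcut : ∀ j < n, WmapLeftPt s₁ p r a ≤ (Wmap s₁ s₂ p q r a)^[j] x) :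
    (Wmap s₁ s₂ p q r a)^[n] x =
      WmapFixedPt s₁ p r a + (s₁ + p * a) ^ n * (x - WmapFixedPt s₁ p r a) :=
  iterate_eq_add_pow_mul_sub_of_le (by linarith)
    (fun _ hy₁ hy₂ ↦
      Wmap_eq_WmapFixedPt_add hS.ne' hy₁ (hy₂.trans_lt (WmapFixedPt_lt_half hS hR)))
    hx hcut

theorem lt_Wmap_iterate_half_of_lt_kIndex {j : ℕ} (hj : 1 ≤ j) (hjk : j < kIndex s₁ s₂ p q r a) :
    WmapLeftPt s₁ p r a < (Wmap s₁ s₂ p q r a)^[j] (1 / 2) :=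
  not_le.1 fun hle ↦ Nat.notMem_of_lt_sInf hjk ⟨hj, hle⟩

/-- How far the second iterate of `1 / 2` lies below `WmapFixedPt s₁ p r a`, divided by `a`, as the
paper writes it; the factor in parentheses is `S * T - S - T` for the slopes `S = s₁ + p * a` and
`T = s₂ + q * a`. -/
noncomputable def WmapGap (s₁ s₂ p q r a : ℝ) : ℝ :=
  r * (s₁ * s₂ - s₁ - s₂ + a * (q * s₁ + p * s₂ - p - q + p * q * a)) / (s₁ + p * a - 1)

theorem WmapFixedPt_sub_mul_WmapGap (hS : s₁ + p * a ≠ 1) :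
    WmapFixedPt s₁ p r a - a * WmapGap s₁ s₂ p q r a = -(r * a) * (s₂ + q * a) + 1 / 2 + r * a := by
  have hS' : s₁ + p * a - 1 ≠ 0 := sub_ne_zero.2 hS
  rw [WmapFixedPt, WmapGap]
  field_simp
  ring

theorem mul_WmapGap_nonneg (hS : 1 < s₁ + p * a) (hR : 0 ≤ r * a)
    (hST : (s₁ + p * a) + (s₂ + q * a) ≤ (s₁ + p * a) * (s₂ + q * a)) :
    0 ≤ a * WmapGap s₁ s₂ p q r a := by
  have hgap : a * WmapGap s₁ s₂ p q r a =
      r * a * ((s₁ + p * a) * (s₂ + q * a) - ((s₁ + p * a) + (s₂ + q * a))) / (s₁ + p * a - 1) := by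
    rw [WmapGap]
    ring
  rw [hgap]
  exact div_nonneg (mul_nonneg hR (sub_nonneg.2 hST)) (sub_nonneg.2 hS.le)

theorem Wmap_iterate_add_two_half {n : ℕ}
    (hS : 1 < s₁ + p * a) (hT : 0 < s₂ + q * a) (hR : 0 < r * a)
    (hST : (s₁ + p * a) + (s₂ + q * a) ≤ (s₁ + p * a) * (s₂ + q * a))
    (hRT : r * a * (s₂ + q * a) < 1 / 2 + r * a) (hn : n + 2 ≤ kIndex s₁ s₂ p q r a) :
    (Wmap s₁ s₂ p q r a)^[n + 2] (1 / 2) =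
      -a * (s₁ + p * a) ^ n * WmapGap s₁ s₂ p q r a + WmapFixedPt s₁ p r a := by
  have htwo : (Wmap s₁ s₂ p q r a)^[2] (1 / 2) =
      WmapFixedPt s₁ p r a - a * WmapGap s₁ s₂ p q r a := by
    rw [Wmap_iterate_two_half (by linarith) hT hR.le hRT, WmapFixedPt_sub_mul_WmapGap hS.ne']
  have hle : (Wmap s₁ s₂ p q r a)^[2] (1 / 2) ≤ WmapFixedPt s₁ p r a :=
    htwo.trans_le (sub_le_self _ (mul_WmapGap_nonneg hS hR.le hST))
  have hcut (j : ℕ) (hj : j < n) : WmapLeftPt s₁ p r a ≤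
      (Wmap s₁ s₂ p q r a)^[j] ((Wmap s₁ s₂ p q r a)^[2] (1 / 2)) := by
    rw [← Function.iterate_add_apply]
    exact (lt_Wmap_iterate_half_of_lt_kIndex (by lia) (by lia)).le
  rw [Function.iterate_add_apply, Wmap_iterate_of_le_WmapFixedPt hS hR hle hcut, htwo]
  ring

end

theorem add_lt_mul_of_one_div_add_one_div_lt_one {K : Type*} [Field K] [LinearOrder K]
    [IsStrictOrderedRing K] {s t : K} (hs : 0 < s) (ht : 0 < t) (h : 1 / s + 1 / t < 1) :
    s + t < s * t := by
  rw [div_add_div _ _ hs.ne' ht.ne', div_lt_one (by positivity)] at h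
  linarith only [h]

theorem eventually_Wmap_slope_bounds {s₁ s₂ : ℝ} (p q r : ℝ) (hs₁ : 1 < s₁) (hs₂ : 0 < s₂)
    (hsum : 1 / s₁ + 1 / s₂ < 1) :
    ∀ᶠ a in 𝓝 (0 : ℝ), 1 < s₁ + p * a ∧ 0 < s₂ + q * a ∧
      (s₁ + p * a) + (s₂ + q * a) < (s₁ + p * a) * (s₂ + q * a) ∧
      r * a * (s₂ + q * a) < 1 / 2 + r * a := by
  have hST := add_lt_mul_of_one_div_add_one_div_lt_one (one_pos.trans hs₁) hs₂ hsum
  refine .and ?_ (.and ?_ (.and ?_ ?_)) <;>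
    refine ContinuousAt.eventually_lt (by fun_prop) (by fun_prop) ?_ <;> simp [*]

theorem Wmap_iterates_formula_lt_one_general
    (s₁ s₂ p q r : ℝ) (hs₁ : 1 < s₁) (hs₂ : 0 < s₂) (hr : 0 < r) (hsum : 1 / s₁ + 1 / s₂ < 1) :
    ∃ a₀ > (0 : ℝ), ∀ a, 0 < a → a < a₀ →
      Wmap s₁ s₂ p q r a (1 / 2) = 1 / 2 + r * a ∧
      (Wmap s₁ s₂ p q r a)^[2] (1 / 2) = -(r * a) * (s₂ + q * a) + 1 / 2 + r * a ∧
      ∀ m, 3 ≤ m → m ≤ kIndex s₁ s₂ p q r a →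
        (Wmap s₁ s₂ p q r a)^[m] (1 / 2) =
          -a * (s₁ + p * a) ^ (m - 2) * WmapGap s₁ s₂ p q r a + WmapFixedPt s₁ p r a := by
  obtain ⟨a₀, ha₀, hparam⟩ :=
    Metric.eventually_nhds_iff.1 (eventually_Wmap_slope_bounds p q r hs₁ hs₂ hsum)
  refine ⟨a₀, ha₀, fun a ha haa₀ ↦ ?_⟩
  obtain ⟨hS, hT, hST, hRT⟩ := hparam (y := a) (by rwa [Real.dist_0_eq_abs, abs_of_pos ha])
  have hS₀ : 0 < s₁ + p * a := one_pos.trans hS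
  have hR : 0 < r * a := mul_pos hr ha
  refine ⟨Wmap_half hS₀ hT (by positivity), Wmap_iterate_two_half hS₀ hT hR.le hRT,
    fun m hm hmk ↦ ?_⟩
  obtain ⟨n, rfl⟩ := Nat.exists_eq_add_of_le' (show 2 ≤ m by lia)
  exact Wmap_iterate_add_two_half hS hT hR hST.le hRT hmk

/-- Lemma 5(I): if `1/s₁ + 1/s₂ < 1` and `a > 0` is sufficiently small, then the first
`k(a)` iterates of `1/2` under `W_a` are given by explicit formulas. -/
theorem Wmap_iterates_formula_lt_one
    (s₁ s₂ p q r : ℝ) (hs₁ : 1 < s₁) (hs₂ : 1 < s₂)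
    (hp : 0 < p) (hq : 0 < q) (hr : 0 < r)
    (hsum : 1/s₁ + 1/s₂ < 1) :
    ∃ a₀ > (0:ℝ), ∀ a, 0 < a → a < a₀ →
      Wmap s₁ s₂ p q r a (1/2) = 1/2 + r*a ∧
      (Wmap s₁ s₂ p q r a)^[2] (1/2) = -(r*a)*(s₂ + q*a) + 1/2 + r*a ∧
      ∀ m, 3 ≤ m → m ≤ kIndex s₁ s₂ p q r a →
        (Wmap s₁ s₂ p q r a)^[m] (1/2) =
          -a*(s₁ + p*a)^(m-2) *
            (r*(s₁*s₂ - s₁ - s₂ + a*(q*s₁ + p*s₂ - p - q + p*q*a))/(s₁ + p*a - 1))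
            + (s₁ - 1 + p*a - 2*r*a)/(2*(s₁ + p*a - 1)) :=
  Wmap_iterates_formula_lt_one_general s₁ s₂ p q r hs₁ (one_pos.trans hs₂) hr hsum
end

section
/- Suppose 1/s₁ + 1/s₂ < 1. Then lim_{a→0⁺} a·k(a) = 0, where k(a) is the first iterate at which the trajectory of 1/2 under W_a drops below 1/2 − (1/2+ra)/(s₁+pa). -/
open MeasureTheory Filter Topology

/-!
Write `σ₁ = s₁ + pa` and `σ₂ = s₂ + qa`. The second branch of `W_a` is affine of slope `σ₁ > 1`
about a repelling fixed point at distance `ra / (σ₁ - 1)` to the left of `1/2`. The orbit of `1/2`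
visits `1/2 + ra` and then `1/2 - ra(σ₂ - 1)`, which is to the left of that fixed point by
`ra(σ₂ - 1 - 1/(σ₁ - 1))`; the last factor stays bounded away from `0` precisely because
`1/s₁ + 1/s₂ < 1`. From then on the distance to the fixed point is multiplied by `σ₁` at each step
until the orbit leaves the branch, so a distance of order `a` is exhausted after `O(log (1/a))`
steps, and `a log (1/a) → 0`.
-/

lemma iterate_sub_eq_pow_mul_sub {R : Type*} [CommRing R] [LinearOrder R] [IsStrictOrderedRing R]
    {f : R → R} {t c m x : R} (hm : 0 ≤ m) (hf : ∀ y ∈ Set.Ioc t c, f y - c = m * (y - c))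
    (hx : x ≤ c) {n : ℕ} (ht : ∀ j < n, t < f^[j] x) :
    f^[n] x - c = m ^ n * (x - c) := by
  induction n with
  | zero => simp
  | succ n ih =>
    have iterate_n : f^[n] x - c = m ^ n * (x - c) := ih fun j hj => ht j (by omega)
    have iterate_n_le : f^[n] x ≤ c := by
      rw [← sub_nonpos, iterate_n]
      exact mul_nonpos_of_nonneg_of_nonpos (pow_nonneg hm n) (sub_nonpos.mpr hx)
    rw [Function.iterate_succ_apply', hf _ ⟨ht n n.lt_succ_self, iterate_n_le⟩, iterate_n]
    ring

lemma tendsto_mul_natCast_of_eventually_mul_pow_le {k : ℝ → ℕ} {s B : ℝ} (hs : 1 < s)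
    (hk : ∀ᶠ a in 𝓝[>] (0 : ℝ), a * s ^ k a ≤ B) :
    Tendsto (fun a => a * (k a : ℝ)) (𝓝[>] (0 : ℝ)) (𝓝 0) := by
  have log_s_pos : 0 < Real.log s := Real.log_pos hs
  have tendsto_bound : Tendsto (fun a => (a * Real.log B - a * Real.log a) / Real.log s)
      (𝓝[>] (0 : ℝ)) (𝓝 0) := by
    have hcont : Continuous fun a => (a * Real.log B - a * Real.log a) / Real.log s :=
      ((continuous_id.mul continuous_const).sub Real.continuous_mul_log).div_const _
    simpa using (hcont.tendsto 0).mono_left nhdsWithin_le_nhds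
  refine squeeze_zero' ?_ ?_ tendsto_bound
  · filter_upwards [self_mem_nhdsWithin] with a (ha : 0 < a)
    positivity
  · filter_upwards [self_mem_nhdsWithin, hk] with a (ha : 0 < a) hka
    have log_le : Real.log a + k a * Real.log s ≤ Real.log B := by
      rw [← Real.log_pow, ← Real.log_mul ha.ne' (by positivity)]
      exact Real.log_le_log (by positivity) hka
    rw [le_div_iff₀ log_s_pos]
    calc a * k a * Real.log s = a * (k a * Real.log s) := mul_assoc _ _ _
      _ ≤ a * (Real.log B - Real.log a) := by gcongr; linarith
      _ = a * Real.log B - a * Real.log a := mul_sub _ _ _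

/-- The quantity `σ₂ - 1 - 1/(σ₁ - 1)`. For slopes `σ₁` and `-σ₂` on the two sides of `1/2`, it
measures, in units of `ra`, how far the second iterate of `1/2` lies beyond the fixed point of the
left branch. -/
noncomputable def slopeExcess (σ₁ σ₂ : ℝ) : ℝ :=
  σ₂ - 1 - 1 / (σ₁ - 1)

lemma slopeExcess_pos {σ₁ σ₂ : ℝ} (hσ₁ : 1 < σ₁) (hσ₂ : 1 < σ₂) (hsum : 1 / σ₁ + 1 / σ₂ < 1) :
    0 < slopeExcess σ₁ σ₂ := by
  have add_lt_mul : σ₂ + σ₁ < σ₁ * σ₂ := by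
    rw [div_add_div _ _ (by positivity) (by positivity), div_lt_one (by positivity)] at hsum
    linarith
  rw [slopeExcess, sub_pos, div_lt_iff₀ (by linarith)]
  linarith

lemma one_lt_of_slopeExcess_pos {σ₁ σ₂ : ℝ} (hσ₁ : 1 < σ₁) (h : 0 < slopeExcess σ₁ σ₂) :
    1 < σ₂ := by
  have : 0 < 1 / (σ₁ - 1) := one_div_pos.mpr (sub_pos.mpr hσ₁)
  rw [slopeExcess] at h
  linarith

/-- The fixed point of `W_a` on its second branch, the increasing one just to the left of `1/2`. -/
noncomputable def leftFixedPoint (s₁ p r a : ℝ) : ℝ :=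
  1 / 2 - r * a / (s₁ + p * a - 1)

section Orbit

variable {s₁ s₂ p q r a : ℝ}

lemma leftFixedPoint_lt_half (hσ₁ : 1 < s₁ + p * a) (hra : 0 < r * a) :
    leftFixedPoint s₁ p r a < 1 / 2 :=
  sub_lt_self _ (div_pos hra (sub_pos.mpr hσ₁))

lemma leftFixedPoint_sub_threshold_lt_half (hσ₁ : 1 < s₁ + p * a) (hra : 0 < r * a) :
    leftFixedPoint s₁ p r a - (1 / 2 - (1 / 2 + r * a) / (s₁ + p * a)) < 1 / 2 := by
  have half_div_lt : 1 / 2 / (s₁ + p * a) < 1 / 2 := div_lt_self (by norm_num) hσ₁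
  have div_le_div_sub_one : r * a / (s₁ + p * a) ≤ r * a / (s₁ + p * a - 1) :=
    div_le_div_of_nonneg_left hra.le (by linarith) (by linarith)
  rw [leftFixedPoint, add_div]
  linarith

lemma Wmap_sub_leftFixedPoint (hσ₁ : 1 < s₁ + p * a) {x : ℝ}
    (hx : 1 / 2 - (1 / 2 + r * a) / (s₁ + p * a) ≤ x) (hx' : x < 1 / 2) :
    Wmap s₁ s₂ p q r a x - leftFixedPoint s₁ p r a =
      (s₁ + p * a) * (x - leftFixedPoint s₁ p r a) := by
  have sub_one_ne_zero : s₁ + p * a - 1 ≠ 0 := (sub_pos.mpr hσ₁).ne'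
  rw [Wmap, if_neg hx.not_gt, if_pos hx', leftFixedPoint]
  field_simp
  ring

lemma Wmap_of_half_le (hσ₁ : 0 ≤ s₁ + p * a) (hra : 0 ≤ r * a) {x : ℝ} (hx : 1 / 2 ≤ x)
    (hx' : x < 1 / 2 + (1 / 2 + r * a) / (s₂ + q * a)) :
    Wmap s₁ s₂ p q r a x = -(s₂ + q * a) * (x - 1 / 2) + 1 / 2 + r * a := by
  have threshold_le_half : 0 ≤ (1 / 2 + r * a) / (s₁ + p * a) := by positivity
  rw [Wmap, if_neg (by linarith), if_neg hx.not_gt, if_pos hx']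

lemma leftFixedPoint_sub_Wmap_iterate_two (hσ₁ : 0 ≤ s₁ + p * a) (hσ₂ : 0 < s₂ + q * a)
    (hra : 0 ≤ r * a) (hsmall : r * a * (s₂ + q * a - 1) < 1 / 2) :
    leftFixedPoint s₁ p r a - (Wmap s₁ s₂ p q r a)^[2] (1 / 2) =
      r * a * slopeExcess (s₁ + p * a) (s₂ + q * a) := by
  have first_iterate : Wmap s₁ s₂ p q r a (1 / 2) = 1 / 2 + r * a := by
    rw [Wmap_of_half_le hσ₁ hra le_rfl (lt_add_of_pos_right _ (by positivity))]
    ring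
  have first_iterate_lt : 1 / 2 + r * a < 1 / 2 + (1 / 2 + r * a) / (s₂ + q * a) := by
    rw [add_lt_add_iff_left, lt_div_iff₀ hσ₂]
    linarith
  rw [Function.iterate_succ_apply, Function.iterate_one, first_iterate,
    Wmap_of_half_le hσ₁ hra (by linarith) first_iterate_lt, leftFixedPoint, slopeExcess]
  ring

lemma threshold_lt_Wmap_iterate_of_lt_kIndex {j : ℕ} (hj : 1 ≤ j)
    (hjk : j < kIndex s₁ s₂ p q r a) :
    1 / 2 - (1 / 2 + r * a) / (s₁ + p * a) < (Wmap s₁ s₂ p q r a)^[j] (1 / 2) := by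
  by_contra hle
  exact Nat.notMem_of_lt_sInf hjk ⟨hj, not_lt.mp hle⟩

lemma leftFixedPoint_sub_Wmap_iterate (hσ₁ : 1 < s₁ + p * a) (hra : 0 < r * a)
    (hexcess : 0 < slopeExcess (s₁ + p * a) (s₂ + q * a))
    (hsmall : r * a * (s₂ + q * a - 1) < 1 / 2) {n : ℕ} (hn : n + 2 ≤ kIndex s₁ s₂ p q r a) :
    leftFixedPoint s₁ p r a - (Wmap s₁ s₂ p q r a)^[n + 2] (1 / 2) =
      (s₁ + p * a) ^ n * (r * a * slopeExcess (s₁ + p * a) (s₂ + q * a)) := by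
  have second_iterate := leftFixedPoint_sub_Wmap_iterate_two (zero_lt_one.trans hσ₁).le
    (zero_lt_one.trans (one_lt_of_slopeExcess_pos hσ₁ hexcess)) hra.le hsmall
  have second_iterate_le : (Wmap s₁ s₂ p q r a)^[2] (1 / 2) ≤ leftFixedPoint s₁ p r a := by
    rw [← sub_nonneg, second_iterate]
    positivity
  have expansion := iterate_sub_eq_pow_mul_sub (n := n) (zero_lt_one.trans hσ₁).le
    (fun y hy => Wmap_sub_leftFixedPoint (s₂ := s₂) (q := q) hσ₁ hy.1.le
      (hy.2.trans_lt (leftFixedPoint_lt_half hσ₁ hra)))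
    second_iterate_le fun j hj => by
      rw [← Function.iterate_add_apply]
      exact threshold_lt_Wmap_iterate_of_lt_kIndex (by omega) (by omega)
  rw [← second_iterate, Function.iterate_add_apply, ← neg_sub, expansion]
  ring

-- The truncated subtraction makes the exponent `0` when the orbit leaves within three steps.
lemma pow_kIndex_sub_three_mul_slopeExcess_lt (hσ₁ : 1 < s₁ + p * a) (hra : 0 < r * a)
    (hexcess : 0 < slopeExcess (s₁ + p * a) (s₂ + q * a))
    (hsmall : r * a * (s₂ + q * a - 1) < 1 / 2) :
    (s₁ + p * a) ^ (kIndex s₁ s₂ p q r a - 3) *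
      (r * a * slopeExcess (s₁ + p * a) (s₂ + q * a)) < 1 / 2 := by
  rcases le_or_gt (kIndex s₁ s₂ p q r a) 3 with early | late
  · have excess_le : slopeExcess (s₁ + p * a) (s₂ + q * a) ≤ s₂ + q * a - 1 :=
      sub_le_self _ (one_div_nonneg.mpr (sub_pos.mpr hσ₁).le)
    rw [Nat.sub_eq_zero_of_le early, pow_zero, one_mul]
    exact (mul_le_mul_of_nonneg_left excess_le hra.le).trans_lt hsmall
  · rw [← leftFixedPoint_sub_Wmap_iterate hσ₁ hra hexcess hsmall (by omega)]
    have still_inside : 1 / 2 - (1 / 2 + r * a) / (s₁ + p * a) <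
        (Wmap s₁ s₂ p q r a)^[kIndex s₁ s₂ p q r a - 3 + 2] (1 / 2) :=
      threshold_lt_Wmap_iterate_of_lt_kIndex (by omega) (by omega)
    linarith [leftFixedPoint_sub_threshold_lt_half hσ₁ hra]

end Orbit

lemma eventually_lt_slopeExcess {s₁ s₂ d : ℝ} (p q : ℝ) (hs₁ : s₁ ≠ 1)
    (hd : d < slopeExcess s₁ s₂) :
    ∀ᶠ a in 𝓝 (0 : ℝ), d < slopeExcess (s₁ + p * a) (s₂ + q * a) := by
  have hcont : ContinuousAt (fun a => slopeExcess (s₁ + p * a) (s₂ + q * a)) 0 := by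
    unfold slopeExcess
    have : s₁ + p * 0 - 1 ≠ 0 := by simpa [sub_eq_zero] using hs₁
    fun_prop (disch := assumption)
  exact hcont.eventually_const_lt (by simpa using hd)

lemma eventually_mul_pow_kIndex_le {s₁ s₂ r s d : ℝ} (p q : ℝ) (hr : 0 < r) (hs : 1 < s)
    (hss₁ : s < s₁) (hd : 0 < d) (hd' : d < slopeExcess s₁ s₂) :
    ∀ᶠ a in 𝓝[>] (0 : ℝ), a * s ^ kIndex s₁ s₂ p q r a ≤ s ^ 3 / (2 * r * d) := by
  have slope_gt : ∀ᶠ a in 𝓝 (0 : ℝ), s < s₁ + p * a :=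
    (show Continuous fun a => s₁ + p * a by fun_prop).continuousAt.eventually_const_lt
      (by simpa using hss₁)
  have small : ∀ᶠ a in 𝓝 (0 : ℝ), r * a * (s₂ + q * a - 1) < 1 / 2 :=
    (show Continuous fun a => r * a * (s₂ + q * a - 1) by fun_prop).continuousAt.eventually_lt_const
      (by norm_num)
  filter_upwards [self_mem_nhdsWithin, nhdsWithin_le_nhds slope_gt, nhdsWithin_le_nhds small,
    nhdsWithin_le_nhds (eventually_lt_slopeExcess p q (hs.trans hss₁).ne' hd')]
    with a (ha : 0 < a) hslope hsmall hexcess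
  have escape := pow_kIndex_sub_three_mul_slopeExcess_lt (hs.trans hslope) (mul_pos hr ha)
    (hd.trans hexcess) hsmall
  set k := kIndex s₁ s₂ p q r a
  have slope_nonneg : 0 ≤ s₁ + p * a := by linarith
  have pow_sub_three_mul_lt : s ^ (k - 3) * (r * a * d) < 1 / 2 := lt_of_le_of_lt (by gcongr) escape
  rw [le_div_iff₀ (by positivity)]
  calc a * s ^ k * (2 * r * d) ≤ a * s ^ (k - 3 + 3) * (2 * r * d) := by
        gcongr
        exacts [hs.le, le_tsub_add]
    _ = 2 * s ^ 3 * (s ^ (k - 3) * (r * a * d)) := by ring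
    _ ≤ 2 * s ^ 3 * (1 / 2) := by gcongr
    _ = s ^ 3 := by ring

theorem Wmap_a_mul_k_tendsto_zero_lt_one_general
    (s₁ s₂ p q r : ℝ) (hs₁ : 1 < s₁) (hs₂ : 1 < s₂) (hr : 0 < r) (hsum : 1 / s₁ + 1 / s₂ < 1) :
    Tendsto (fun a => a * (kIndex s₁ s₂ p q r a : ℝ)) (𝓝[>] (0 : ℝ)) (𝓝 0) := by
  obtain ⟨s, hs, hss₁⟩ := exists_between hs₁
  obtain ⟨d, hd, hd'⟩ := exists_between (slopeExcess_pos hs₁ hs₂ hsum)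
  exact tendsto_mul_natCast_of_eventually_mul_pow_le hs
    (eventually_mul_pow_kIndex_le p q hr hs hss₁ hd hd')

/-- Lemma 5(II): if `1/s₁ + 1/s₂ < 1`, then `a·k(a) → 0` as `a → 0⁺`. -/
theorem Wmap_a_mul_k_tendsto_zero_lt_one
    (s₁ s₂ p q r : ℝ) (hs₁ : 1 < s₁) (hs₂ : 1 < s₂)
    (hp : 0 < p) (hq : 0 < q) (hr : 0 < r)
    (hsum : 1/s₁ + 1/s₂ < 1) :
    Tendsto (fun a => a * (kIndex s₁ s₂ p q r a : ℝ)) (𝓝[>] (0:ℝ)) (𝓝 0) :=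
  Wmap_a_mul_k_tendsto_zero_lt_one_general s₁ s₂ p q r hs₁ hs₂ hr hsum
end
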